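/- Let T be a complete geometric theory and let (M, H(M)) be an expansion of a model M ⊨ T satisfying the density property and the extension property. Then whenever A ⊆ M has finite dimension and p(x_1,…,x_n) ∈ S_n(A) is an L-type of dimension n, p has a realization in H(M)^n and a realization in (M \ acl_L(A ∪ H(M)))^n; furthermore one can choose a realization b̄ ∈ (M \ acl_L(A ∪ H(M)))^n of p with dim(b̄ / acl_L(A ∪ H(M))) = n. -/

import Mathlib

open FirstOrder

namespace HPaper

universe u v w

variable {M : Type w} (L : FirstOrder.Language.{u, v}) [L.Structure M]


/-- `x` is (model-theoretically) algebraic over the parameter set `A`: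
it satisfies a formula with parameters in `A` having finitely many solutions. -/
def acl (A : Set M) : Set M :=
  {x : M | ∃ φ : (L.withConstants A).Formula (Fin 1),
      {y : M | φ.Realize (fun _ => y)}.Finite ∧ φ.Realize (fun _ => x)}

/-- Two tuples have the same `L`-type over the parameter set `A`. -/
def SameType (A : Set M) {α : Type*} (a b : α → M) : Prop :=
  ∀ φ : (L.withConstants A).Formula α, φ.Realize a ↔ φ.Realize b

/-- The (algebraic-closure) dimension of a finite tuple over a base set: the least
cardinality of a subtuple over which (together with the base) the whole tuple is algebraic. -/
noncomputable def dim {α : Type*} [Fintype α] (a : α → M) (B : Set M) : ℕ :=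
  sInf {k : ℕ | ∃ s : Finset α, s.card = k ∧ ∀ i, a i ∈ acl L (B ∪ (a '' ↑s))}

/-- The tuple `a` is algebraically independent from `C` over `B`. -/
def Indep {α : Type*} [Fintype α] (a : α → M) (B C : Set M) : Prop :=
  dim L a (B ∪ C) = dim L a B

/-- The set `A` is algebraically independent from `C` over `B`. -/
def SetIndep (A B C : Set M) : Prop :=
  ∀ (n : ℕ) (a : Fin n → M), (∀ i, a i ∈ A) → Indep L a B C

/-- `A` is `H`-independent: `A` is independent from `H` over `A ∩ H`. -/
def HIndepSet (H A : Set M) : Prop :=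
  SetIndep L A (A ∩ H) H

/-- A tuple is `H`-independent. -/
def HIndepTuple (H : Set M) {α : Type*} [Fintype α] (a : α → M) : Prop :=
  Indep L a (Set.range a ∩ H) H

/-- `A` has finite dimension. -/
def FinDim (A : Set M) : Prop :=
  ∃ s : Finset M, A ⊆ acl L ↑s

/-- The exchange property for algebraic closure. -/
def Exchange (L' : FirstOrder.Language.{u, v}) (N : Type w) [L'.Structure N] : Prop :=
  ∀ (A : Set N) (a b : N), a ∈ acl L' (A ∪ {b}) → a ∉ acl L' A → b ∈ acl L' (A ∪ {a})

/-- Uniform elimination of the quantifier `∃^∞` in the structure `N`. -/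
def ElimInfty (L' : FirstOrder.Language.{u, v}) (N : Type w) [L'.Structure N] : Prop :=
  ∀ (q : ℕ) (φ : L'.Formula (Fin 1 ⊕ Fin q)), ∃ Nb : ℕ, ∀ v : Fin q → N,
    {x : N | φ.Realize (Sum.elim (fun _ => x) v)}.Finite →
      {x : N | φ.Realize (Sum.elim (fun _ => x) v)}.ncard ≤ Nb

/-- `N` is a geometric structure: acl satisfies exchange and `∃^∞` is eliminated. -/
def Geometric (L' : FirstOrder.Language.{u, v}) (N : Type w) [L'.Structure N] : Prop :=
  Exchange L' N ∧ ElimInfty L' N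

/-- The density property of the pair `(M, H)`. -/
def DensityProp (H : Set M) : Prop :=
  ∀ A : Set M, FinDim L A → ∀ a : M, a ∉ acl L A →
    ∃ h ∈ H, SameType L A (fun _ : Fin 1 => a) (fun _ => h)

/-- The extension property of the pair `(M, H)`. -/
def ExtensionProp (H : Set M) : Prop :=
  ∀ A : Set M, FinDim L A → ∀ a : M, a ∉ acl L A →
    ∃ b : M, b ∉ acl L (A ∪ H) ∧ SameType L A (fun _ : Fin 1 => a) (fun _ => b)

/-- `H` is an algebraically independent set. -/
def AclIndepSet (H : Set M) : Prop :=
  ∀ h ∈ H, h ∉ acl L (H \ {h})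

/-- `(M, H)` is an `H`-structure. -/
def IsHStructure (H : Set M) : Prop :=
  DensityProp L H ∧ ExtensionProp L H ∧ AclIndepSet L H

/-- `h` enumerates an `H`-basis of the tuple `a` over the set `A`: a minimal-length tuple of
distinct elements of `H` such that `a⌢h` is independent from `H` over `A`. -/
def IsHBasis (H : Set M) (A : Set M) {α : Type*} [Fintype α] {k : ℕ}
    (a : α → M) (h : Fin k → M) : Prop :=
  (∀ i, h i ∈ H) ∧ Function.Injective h ∧ Indep L (Sum.elim a h) A H ∧
    ∀ (k' : ℕ) (h' : Fin k' → M), (∀ i, h' i ∈ H) → Indep L (Sum.elim a h') A H → k ≤ k'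

/-- Countable saturation (a rendering of "sufficiently saturated", adequate for
the countably-many-parameters arguments in the paper). -/
def CountSaturated (L' : FirstOrder.Language.{u, v}) (N : Type w) [L'.Structure N] : Prop :=
  ∀ (A : Set N), A.Countable → ∀ (n : ℕ)
    (S : Set ((L'.withConstants A).Formula (Fin n))),
    (∀ F : Finset ((L'.withConstants A).Formula (Fin n)), ↑F ⊆ S →
      ∃ a : Fin n → N, ∀ φ ∈ F, φ.Realize a) →
    ∃ a : Fin n → N, ∀ φ ∈ S, φ.Realize a

/-- The theory of `M` is nowhere trivial. -/
def NowhereTrivial (L' : FirstOrder.Language.{u, v}) (N : Type w) [L'.Structure N] : Prop :=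
  ∀ (A : Set N), A.Countable → ∀ a : N, a ∉ acl L' A →
    ∃ (m k : ℕ) (b : Fin m → N) (c : Fin k → N),
      Indep L' (fun _ : Fin 1 => a) A (Set.range b) ∧
      Indep L' (fun _ : Fin 1 => a) A (Set.range c) ∧
      a ∈ acl L' ((A ∪ Set.range b) ∪ Set.range c)



/-- The formula `φ(x̄, b̄)` divides over `A`: there is an `A`-indiscernible sequence of
tuples, each with the same type as `b̄` over `A`, along which the instances of `φ` are
`k`-inconsistent. -/
def FormulaDivides {α : Type*} {m : ℕ} (φ : L.Formula (α ⊕ Fin m))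
    (b : Fin m → M) (A : Set M) : Prop :=
  ∃ (bs : ℕ → Fin m → M) (k : ℕ), 0 < k ∧
    (∀ i, SameType L A (bs i) b) ∧
    (∀ (l : ℕ) (f g : Fin l → ℕ), StrictMono f → StrictMono g →
      SameType L A (fun p : Fin l × Fin m => bs (f p.1) p.2)
        (fun p : Fin l × Fin m => bs (g p.1) p.2)) ∧
    (∀ s : Finset ℕ, s.card = k → ¬ ∃ x : α → M, ∀ i ∈ s, φ.Realize (Sum.elim x (bs i)))

/-- The formula `φ(x̄, b̄)` forks over `A`: it implies a finite disjunction of formulas,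
each of which divides over `A`. -/
def FormulaForks {α : Type*} {m : ℕ} (φ : L.Formula (α ⊕ Fin m))
    (b : Fin m → M) (A : Set M) : Prop :=
  ∃ (N : ℕ) (m' : Fin N → ℕ) (ψ : ∀ j, L.Formula (α ⊕ Fin (m' j)))
    (c : ∀ j, Fin (m' j) → M),
    (∀ j, FormulaDivides L (ψ j) (c j) A) ∧
    ∀ x : α → M, φ.Realize (Sum.elim x b) → ∃ j, (ψ j).Realize (Sum.elim x (c j))

/-- The type of `ā` over `B` forks over `A`. -/
def TypeForks {α : Type*} (a : α → M) (B A : Set M) : Prop :=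
  ∃ (m : ℕ) (φ : L.Formula (α ⊕ Fin m)) (b : Fin m → M),
    (∀ i, b i ∈ B) ∧ φ.Realize (Sum.elim a b) ∧ FormulaForks L φ b A

/-- `SUge L a A α` : the `SU`-rank of `tp(ā/A)` is at least `α`. -/
noncomputable def SUge {α' : Type*} (a : α' → M) (o : Ordinal.{0}) (A : Set M) : Prop :=
  Ordinal.lt_wf.fix (C := fun _ => Set M → Prop)
    (fun o ih A => ∀ β (h : β < o), ∃ B : Set M, A ⊆ B ∧ TypeForks L a B A ∧ ih β h B) o A

/-- The `SU`-rank of `tp(ā/A)`, as an ordinal (assuming it is ordinal-valued). -/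
noncomputable def SU {α' : Type*} (a : α' → M) (A : Set M) : Ordinal.{0} :=
  sSup {o : Ordinal | SUge L a o A}

/-- `T` has `SU`-rank one: every non-algebraic `1`-type has `SU`-rank `1`. -/
def SURankOne (L' : FirstOrder.Language.{u, v}) (N : Type w) [L'.Structure N] : Prop :=
  (∀ (a : N) (A : Set N), a ∈ acl L' A → SU L' (fun _ : Fin 1 => a) A = 0) ∧
  (∀ (a : N) (A : Set N), a ∉ acl L' A → SU L' (fun _ : Fin 1 => a) A = 1)

/-- The `SU`-rank of the (type-)definable set `X` over `A` equals `o` (and is attained). -/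
def SUSetEq {α' : Type*} (X : Set (α' → M)) (A : Set M) (o : Ordinal.{0}) : Prop :=
  (∀ a ∈ X, SU L a A ≤ o) ∧ ∃ a ∈ X, SU L a A = o

/-- The `SU`-rank of the set `X` over `A` is (strictly) less than `o`. -/
def SUSetLt {α' : Type*} (X : Set (α' → M)) (A : Set M) (o : Ordinal.{0}) : Prop :=
  ∀ a ∈ X, SU L a A < o

/-- Shorthand for the ordinal `ω·n + k`. -/
noncomputable def wnk (n k : ℕ) : Ordinal.{0} :=
  Ordinal.omega0 * (n : Ordinal) + (k : Ordinal)



/-- The language consisting of a single unary predicate. -/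
def unaryLang : FirstOrder.Language.{0, 0} :=
  ⟨fun _ => Empty, fun n => match n with | 1 => PUnit | _ => Empty⟩

/-- Interpret the unary predicate of `unaryLang` as membership in `H`. -/
def unaryStructure (H : Set M) : unaryLang.Structure M where
  funMap := fun {_} f _ => Empty.elim f
  RelMap := fun {n} r v =>
    match n, r, v with
    | 1, _, v => v 0 ∈ H
    | 0, r, _ => Empty.elim r
    | (_ + 2), r, _ => Empty.elim r

/-- The language `L_H = L ∪ {H}`. -/
def LH (L : FirstOrder.Language.{u, v}) : FirstOrder.Language :=
  L.sum unaryLang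

/-- The `L_H`-structure on `M` induced by the `L`-structure and the set `H`. -/
def hStructure (H : Set M) : (LH L).Structure M :=
  letI : unaryLang.Structure M := unaryStructure H
  inferInstanceAs ((L.sum unaryLang).Structure M)

/-- Realization of `L_H`-formulas in `(M, H)`. -/
def RealizeH (H : Set M) {α : Type*} (φ : (LH L).Formula α) (v : α → M) : Prop :=
  letI := hStructure L H
  φ.Realize v

/-- `L_H`-definability over a parameter set, in `(M, H)`. -/
def DefinableH (H : Set M) {α : Type*} (A : Set M) (s : Set (α → M)) : Prop :=
  letI := hStructure L H
  Set.Definable A (LH L) s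

/-- `acl` in the sense of `L_H` in `(M, H)`. -/
noncomputable def aclH (H : Set M) (A : Set M) : Set M :=
  letI := hStructure L H
  acl (LH L) A

/-- Equality of `L_H`-types over a parameter set, in `(M, H)`. -/
def SameTypeH (H : Set M) (A : Set M) {α : Type*} (a b : α → M) : Prop :=
  letI := hStructure L H
  SameType (LH L) A a b


/-- `SU`-rank in the sense of `L_H`, computed in `(M, H)`. -/
noncomputable def SUH (H : Set M) {α' : Type*} (a : α' → M) (A : Set M) : Ordinal.{0} :=
  letI := hStructure L H
  SU (LH L) a A

/-- `SUge` in the sense of `L_H`, computed in `(M, H)`. -/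
noncomputable def SUgeH (H : Set M) {α' : Type*} (a : α' → M) (o : Ordinal.{0})
    (A : Set M) : Prop :=
  letI := hStructure L H
  SUge (LH L) a o A

/-- The `L_H`-`SU`-rank of the set `X` over `A` equals `o` (and is attained). -/
def SUSetEqH (H : Set M) {α' : Type*} (X : Set (α' → M)) (A : Set M)
    (o : Ordinal.{0}) : Prop :=
  letI := hStructure L H
  SUSetEq (LH L) X A o

/-- The `L_H`-`SU`-rank of the set `X` over `A` is less than `o`. -/
def SUSetLtH (H : Set M) {α' : Type*} (X : Set (α' → M)) (A : Set M)
    (o : Ordinal.{0}) : Prop :=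
  letI := hStructure L H
  SUSetLt (LH L) X A o


/-- `(M, H)` is countably saturated as an `L_H`-structure. -/
def CountSaturatedH (H : Set M) : Prop :=
  letI := hStructure L H
  CountSaturated (LH L) M


theorem mem_acl_iff {A : Set M} {x : M} :
    x ∈ acl L A ↔ ∃ S : Set M, S.Finite ∧ A.Definable₁ L S ∧ x ∈ S := by
  constructor
  · rintro ⟨φ, hfin, hx⟩
    refine ⟨_, hfin, ⟨φ, ?_⟩, hx⟩
    ext v
    have hv : (fun _ => v 0) = v := funext fun i => by rw [Subsingleton.elim i 0]
    change φ.Realize (fun _ => v 0) ↔ φ.Realize v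
    rw [hv]
  · rintro ⟨S, hfin, ⟨φ, hφ⟩, hx⟩
    have hS : ∀ y, y ∈ S ↔ φ.Realize (fun _ => y) := fun y =>
      Set.ext_iff.1 hφ fun _ => y
    refine ⟨φ, ?_, (hS x).1 hx⟩
    convert! hfin using 1
    ext y
    exact (hS y).symm

theorem SameType.mem_iff {A : Set M} {α : Type*} {a b : α → M} (h : SameType L A a b)
    {s : Set (α → M)} (hs : A.Definable L s) : a ∈ s ↔ b ∈ s := by
  obtain ⟨φ, rfl⟩ := hs
  exact h φ

theorem SameType.refl (A : Set M) {α : Type*} (a : α → M) : SameType L A a a :=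
  fun _ => Iff.rfl

theorem SameType.trans {A : Set M} {α : Type*} {a b c : α → M} (h : SameType L A a b)
    (h' : SameType L A b c) : SameType L A a c :=
  fun φ => (h φ).trans (h' φ)

theorem acl_mono {A B : Set M} (h : A ⊆ B) : acl L A ⊆ acl L B := by
  intro x hx
  rw [mem_acl_iff] at hx ⊢
  obtain ⟨S, hfin, hS, hxS⟩ := hx
  exact ⟨S, hfin, Set.Definable.mono hS h, hxS⟩

theorem subset_acl (A : Set M) : A ⊆ acl L A := fun x hx =>
  (mem_acl_iff L).2 ⟨{x}, Set.finite_singleton x, Set.Definable.singleton_of_mem L hx, rfl⟩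

/-- Parameters from the range of a tuple can be replaced by extra variables. -/
theorem exists_definable_of_union_range {B : Set M} {α β : Type*} {c : β → M}
    {s : Set (α → M)} (hs : (B ∪ Set.range c).Definable L s) :
    ∃ R : Set (α ⊕ β → M), B.Definable L R ∧ ∀ v, v ∈ s ↔ Sum.elim v c ∈ R := by
  classical
  obtain ⟨φ, rfl⟩ := Set.definable_iff_exists_formula_sum.1 hs
  have hc : ∀ p : ↥(B ∪ Set.range c), (p : M) ∉ B → ∃ i, c i = p := fun p hp =>
    p.2.resolve_left hp
  let t : ↥(B ∪ Set.range c) ⊕ α → (L.withConstants B).Term (α ⊕ β) :=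
    Sum.elim
      (fun p => if hp : (p : M) ∈ B then (L.con (⟨p, hp⟩ : B)).term
        else Language.Term.var (Sum.inr (hc p hp).choose))
      (fun i => Language.Term.var (Sum.inl i))
  refine ⟨_, ⟨((L.lhomWithConstants B).onFormula φ).subst t, rfl⟩, fun v => ?_⟩
  have ht : (fun i => (t i).realize (Sum.elim v c)) = Sum.elim Subtype.val v := by
    funext i
    rcases i with p | i
    · by_cases hp : (p : M) ∈ B
      · simp [t, hp]
      · simpa [t, hp] using (hc p hp).choose_spec
    · simp [t]
  change φ.Realize _ ↔ Language.BoundedFormula.Realize (Language.BoundedFormula.subst _ t) _ _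
  rw [Language.BoundedFormula.realize_subst, ht]
  exact (Language.LHom.realize_onFormula _ φ).symm

theorem acl_subset_acl {B C : Set M} (h : C ⊆ acl L B) : acl L C ⊆ acl L B := by
  intro x hx
  obtain ⟨S, hfin, hS, hxS⟩ := (mem_acl_iff L).1 hx
  obtain ⟨C₀, hC₀, hS₀⟩ := Set.definable_iff_finitely_definable.1 hS
  have hS₁ : (B ∪ Set.range fun i : C₀ => (i : M)).Definable L {v : Fin 1 → M | v 0 ∈ S} :=
    hS₀.mono fun y hy => Or.inr ⟨⟨y, hy⟩, rfl⟩
  obtain ⟨R, hR, hSR⟩ := exists_definable_of_union_range L hS₁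
  choose Y hYfin hY hmem using fun i : C₀ => (mem_acl_iff L).1 (h (hC₀ i.2))
  obtain ⟨k, e, -, he⟩ := hfin.fin_param
  let Q : Set (C₀ → M) := {u | ∃ w : Fin k → M, ∀ z : Fin 1 → M,
    Sum.elim z u ∈ R → ∃ j, z 0 = w j}
  have hQ : B.Definable L Q := by
    have hbody : B.Definable L ({f : (C₀ ⊕ Fin k) ⊕ Fin 1 → M |
        f ∘ Sum.elim Sum.inr (Sum.inl ∘ Sum.inl) ∈ R}ᶜ ∪
        ⋃ j : Fin k, {f | f (Sum.inr 0) = f (Sum.inl (Sum.inr j))}) :=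
      (hR.preimage_comp _).compl.union <| Set.definable_iUnion_of_finite fun j =>
        Set.DefinableFun.ofPred_eq (Set.DefinableFun.proj L) (Set.DefinableFun.proj L)
    convert! hbody.forall_of_finite.exists_of_finite using 1
    ext u
    simp only [Q, Set.mem_ofPred_eq, Set.mem_union, Set.mem_compl_iff, Set.mem_iUnion,
      Sum.elim_inr, Sum.elim_inl, imp_iff_not_or, Sum.comp_elim, ← Function.comp_assoc,
      Sum.elim_comp_inr, Sum.elim_comp_inl]
  let P : Set (Fin 1 ⊕ C₀ → M) :=
    R ∩ ({f | f ∘ Sum.inr ∈ Q} ∩ ⋂ i : C₀, {f | f (Sum.inr i) ∈ Y i})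
  have hP : B.Definable L P :=
    hR.inter <| (hQ.preimage_comp _).inter <| Set.definable_iInter_of_finite fun i =>
      (hY i).preimage_comp fun _ => Sum.inr i
  refine (mem_acl_iff L).2 ⟨{y | ∃ u, Sum.elim (fun _ : Fin 1 => y) u ∈ P}, ?_, ?_, ?_⟩
  · refine ((Set.Finite.pi' hYfin).biUnion
      (t := fun u => {y | u ∈ Q ∧ Sum.elim (fun _ : Fin 1 => y) u ∈ R}) fun u _ => ?_).subset ?_
    · by_cases hu : u ∈ Q
      · obtain ⟨w, hw⟩ := hu
        refine (Set.finite_range w).subset fun y hy => ?_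
        obtain ⟨j, hj⟩ := hw _ hy.2
        exact ⟨j, hj.symm⟩
      · simp [hu]
    · rintro y ⟨u, hyR, hyQ, hyY⟩
      exact Set.mem_biUnion (x := u) (fun i => Set.mem_iInter.1 hyY i) ⟨hyQ, hyR⟩
  · refine (congrArg (B.Definable L) ?_).mpr hP.exists_of_finite
    ext v
    have hv : (fun _ => v 0) = v := funext fun i => by rw [Subsingleton.elim i 0]
    change (∃ u, Sum.elim (fun _ => v 0) u ∈ P) ↔ ∃ u, Sum.elim v u ∈ P
    rw [hv]
  · refine ⟨fun i => i, (hSR _).1 hxS, ⟨e, fun z hz => ?_⟩, Set.mem_iInter.2 hmem⟩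
    have hzS : z 0 ∈ S := (hSR z).2 hz
    rw [← he] at hzS
    obtain ⟨j, hj⟩ := hzS
    exact ⟨j, hj.symm⟩

theorem FinDim.union_finite {A B : Set M} (hA : FinDim L A) (hB : B.Finite) :
    FinDim L (A ∪ B) := by
  classical
  obtain ⟨s, hs⟩ := hA
  refine ⟨s ∪ hB.toFinset, Set.union_subset (hs.trans (acl_mono L (by simp))) ?_⟩
  exact (by simp : B ⊆ ↑(s ∪ hB.toFinset)).trans (subset_acl L _)

theorem SameType.notMem_acl {A : Set M} {a b : M}
    (h : SameType L A (fun _ : Fin 1 => a) fun _ => b) (ha : a ∉ acl L A) : b ∉ acl L A := by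
  rintro ⟨φ, hfin, hb⟩
  exact ha ⟨φ, hfin, (h φ).2 hb⟩

/-- Replacing one coordinate by a realization of its type over the remaining ones preserves
the type of the tuple. -/
theorem SameType.update {A : Set M} {α : Type*} [Finite α] [DecidableEq α] {c : α → M}
    {k : α} {b : M}
    (h : SameType L (A ∪ c '' {k}ᶜ) (fun _ : Fin 1 => c k) fun _ => b) :
    SameType L A c (Function.update c k b) := by
  intro φ
  have hmap : (A ∪ c '' {k}ᶜ).DefinableMap L
      fun (v : Fin 1 → M) => Function.update c k (v 0) := by
    intro i
    by_cases hi : i = k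
    · subst hi
      simpa using Set.DefinableFun.proj (A := A ∪ c '' {i}ᶜ) (i := (0 : Fin 1)) L
    · have hci : c i ∈ A ∪ c '' {k}ᶜ := Or.inr ⟨i, hi, rfl⟩
      simpa [hi] using L.definableFun_const (Fin 1) hci
  have hφ : A.Definable L {v | φ.Realize v} := ⟨φ, rfl⟩
  have := h.mem_iff L ((hφ.mono Set.subset_union_left).preimage_map hmap)
  simpa using! this

/-- The coordinates of `c` indexed by `S` are algebraically independent over `B`. -/
def IndepOn (B : Set M) {α : Type*} (c : α → M) (S : Set α) : Prop :=
  ∀ i ∈ S, c i ∉ acl L (B ∪ c '' (S \ {i}))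

theorem IndepOn.update (hex : Exchange L M) {B : Set M} {α : Type*} [DecidableEq α]
    {c : α → M} {S : Set α} (hc : IndepOn L B c S) {k : α} {b : M}
    (hb : b ∉ acl L (B ∪ c '' (S \ {k}))) :
    IndepOn L B (Function.update c k b) (insert k S) := by
  have himage : ∀ U : Set α, k ∉ U → Function.update c k b '' U = c '' U := fun U hU =>
    Set.image_congr fun j hj => Function.update_of_ne (ne_of_mem_of_not_mem hj hU) _ _
  intro i hi hmem
  by_cases hik : i = k
  · subst hik
    have hset : insert i S \ {i} = S \ {i} := by
      ext j
      by_cases hj : j = i <;> simp [hj]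
    rw [hset, himage _ (by simp), Function.update_self] at hmem
    exact hb hmem
  · have hiS : i ∈ S := hi.resolve_left hik
    rw [Function.update_of_ne hik] at hmem
    have hset : insert k S \ {i} = insert k ((S \ {i}) \ {k}) := by
      ext j
      by_cases hj : j = k <;> simp_all [eq_comm]
    rw [hset, Set.image_insert_eq, himage _ (by simp), Function.update_self,
      ← Set.union_singleton, ← Set.union_assoc] at hmem
    have hnot : c i ∉ acl L (B ∪ c '' ((S \ {i}) \ {k})) := fun h =>
      hc i hiS (acl_mono L (Set.union_subset_union_right _
        (Set.image_mono Set.sdiff_subset)) h)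
    refine hb (acl_mono L ?_ (hex _ _ _ hmem hnot))
    rintro y ((hy | ⟨j, hj, rfl⟩) | rfl)
    · exact Or.inl hy
    · exact Or.inr ⟨j, ⟨hj.1.1, hj.2⟩, rfl⟩
    · exact Or.inr ⟨i, ⟨hiS, hik⟩, rfl⟩

theorem dim_eq_card_iff {B : Set M} {α : Type*} [Fintype α] {c : α → M} :
    dim L c B = Fintype.card α ↔ IndepOn L B c Set.univ := by
  classical
  constructor
  · intro h i _ hmem
    have hle : dim L c B ≤ (Finset.univ.erase i).card := by
      refine Nat.sInf_le ⟨_, rfl, fun j => ?_⟩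
      by_cases hj : j = i
      · subst hj
        convert! hmem using 4
        ext x
        simp
      · exact subset_acl L _ (Or.inr ⟨j, by simp [hj], rfl⟩)
    have hlt := Finset.card_erase_lt_of_mem (Finset.mem_univ i)
    rw [h] at hle
    exact absurd (hle.trans_lt hlt) (lt_irrefl _)
  · intro h
    refine IsLeast.csInf_eq ⟨⟨Finset.univ, rfl, fun i => ?_⟩, ?_⟩
    · exact subset_acl L _ (Or.inr ⟨i, by simp, rfl⟩)
    · rintro k ⟨s, rfl, hs⟩
      have hs_univ : s = Finset.univ := by
        refine Finset.eq_univ_iff_forall.2 fun i => ?_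
        by_contra hi
        refine h i trivial (acl_mono L (Set.union_subset_union_right _ (Set.image_mono ?_)) (hs i))
        exact fun j hj => ⟨trivial, ne_of_mem_of_not_mem hj hi⟩
      rw [hs_univ, Finset.card_univ]

theorem IndepOn.acl {B : Set M} {α : Type*} {c : α → M} {S : Set α}
    (h : IndepOn L B c S) : IndepOn L (acl L B) c S := by
  intro i hi hmem
  refine h i hi (acl_subset_acl L (Set.union_subset ?_ ?_) hmem)
  · exact acl_mono L Set.subset_union_left
  · exact Set.subset_union_right.trans (subset_acl L _)

/-- Any property of coordinates which can be achieved for one coordinate of an independent tuple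
while keeping its type over the other coordinates can be achieved step by step. -/
theorem exists_sameType_of_forall_update (hex : Exchange L M) {A : Set M} {α : Type*} [Finite α]
    [DecidableEq α] {a : α → M} (ha : IndepOn L A a Set.univ)
    (P : Finset α → (α → M) → Prop) (hempty : P ∅ a)
    (hstep : ∀ (S : Finset α) (k : α) (c : α → M), k ∉ S → P S c →
      c k ∉ acl L (A ∪ c '' {k}ᶜ) →
      ∃ b, SameType L (A ∪ c '' {k}ᶜ) (fun _ : Fin 1 => c k) (fun _ => b) ∧
        P (insert k S) (Function.update c k b)) (S : Finset α) :
    ∃ c, SameType L A a c ∧ IndepOn L A c Set.univ ∧ P S c := by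
  induction S using Finset.induction_on with
  | empty => exact ⟨a, SameType.refl L A a, ha, hempty⟩
  | insert k S hk ih =>
    obtain ⟨c, hac, hc, hP⟩ := ih
    have hck : c k ∉ acl L (A ∪ c '' {k}ᶜ) := by
      simpa [Set.compl_eq_univ_sdiff] using hc k trivial
    obtain ⟨b, hb, hPb⟩ := hstep S k c hk hP hck
    refine ⟨_, hac.trans L (SameType.update L hb), ?_, hPb⟩
    have hbk := hb.notMem_acl L hck
    rw [Set.compl_eq_univ_sdiff] at hbk
    simpa using hc.update L hex hbk

theorem DensityProp.exists_sameType (hex : Exchange L M) {H A : Set M} (hdens : DensityProp L H)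
    (hA : FinDim L A) {α : Type*} [Finite α] {a : α → M} (ha : IndepOn L A a Set.univ) :
    ∃ h : α → M, (∀ i, h i ∈ H) ∧ SameType L A a h := by
  classical
  cases nonempty_fintype α
  obtain ⟨h, hah, -, hH⟩ := exists_sameType_of_forall_update L hex ha
    (fun S c => ∀ i ∈ S, c i ∈ H) (by simp)
    (fun S k c _ hS hck => by
      obtain ⟨b, hbH, hb⟩ := hdens _ (hA.union_finite L (Set.toFinite _)) _ hck
      refine ⟨b, hb, fun i hi => ?_⟩
      by_cases hik : i = k
      · subst hik
        simpa using hbH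
      · simpa [hik] using hS i (Finset.mem_of_mem_insert_of_ne hi hik))
    Finset.univ
  exact ⟨h, fun i => hH i (Finset.mem_univ i), hah⟩

theorem ExtensionProp.exists_sameType (hex : Exchange L M) {H A : Set M}
    (hext : ExtensionProp L H) (hA : FinDim L A) {α : Type*} [Finite α] {a : α → M}
    (ha : IndepOn L A a Set.univ) :
    ∃ b : α → M, SameType L A a b ∧ IndepOn L (A ∪ H) b Set.univ := by
  classical
  cases nonempty_fintype α
  obtain ⟨b, hab, -, hb⟩ := exists_sameType_of_forall_update L hex ha
    (fun S c => IndepOn L (A ∪ H) c S) (by simp [IndepOn])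
    (fun S k c _ hS hck => by
      obtain ⟨b, hbH, hb⟩ := hext _ (hA.union_finite L (Set.toFinite _)) _ hck
      refine ⟨b, hb, ?_⟩
      rw [Finset.coe_insert]
      refine hS.update L hex fun hmem => hbH (acl_mono L ?_ hmem)
      rintro y ((hy | hy) | ⟨j, hj, rfl⟩)
      · exact Or.inl (Or.inl hy)
      · exact Or.inr hy
      · exact Or.inl (Or.inr ⟨j, hj.2, rfl⟩))
    Finset.univ
  exact ⟨b, hab, by simpa using hb⟩

/-- If `(M, H)` is a dense/codense expansion of a geometric structure,
`A` has finite dimension and `ā` realizes an `L`-type over `A` of dimension `n` (types over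
`A` being represented by tuples realizing them), then the type of `ā` over `A` is realized
in `H^n`, is realized by a tuple of elements outside `acl_L(A ∪ H)`, and moreover such a
tuple can be chosen of full dimension `n` over `acl_L(A ∪ H)`. -/
theorem statement0 {M : Type w} (L : FirstOrder.Language.{u, v}) [L.Structure M]
    (H : Set M) (hgeom : Geometric L M)
    (hdens : DensityProp L H) (hext : ExtensionProp L H)
    (A : Set M) (hA : FinDim L A)
    (n : ℕ) (a : Fin n → M) (hdim : dim L a A = n) :
    (∃ h : Fin n → M, (∀ i, h i ∈ H) ∧ SameType L A a h) ∧
    (∃ b : Fin n → M, (∀ i, b i ∉ acl L (A ∪ H)) ∧ SameType L A a b) ∧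
    (∃ b : Fin n → M, (∀ i, b i ∉ acl L (A ∪ H)) ∧ SameType L A a b ∧
      dim L b (acl L (A ∪ H)) = n) := by
  have ha : IndepOn L A a Set.univ := (dim_eq_card_iff L).1 (by simpa using hdim)
  obtain ⟨b, hab, hb⟩ := hext.exists_sameType L hgeom.1 hA ha
  have hbH : ∀ i, b i ∉ acl L (A ∪ H) := fun i hi =>
    hb i trivial (acl_mono L Set.subset_union_left hi)
  refine ⟨hdens.exists_sameType L hgeom.1 hA ha, ⟨b, hbH, hab⟩, b, hbH, hab, ?_⟩
  simpa using (dim_eq_card_iff L).2 hb.acl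

end HPaper
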